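/- arXiv:2306.12923 — 4 statements merged into one kernel-verified Lean document; each statement's English description precedes it below -/
import Mathlib

section
/- Let ξ ⊆ ℕ⁴ be downward closed and let □ = (n₁,n₂,n₃,n₄) ∈ ξ. Then S₋(□) ⊆ ξ (so ξ ∩ S₋(□) = S₋(□)), the set S₋(□) is finite, and its cardinality is odd if and only if n₁ = n₂ = n₃ < n₄. In particular, |ξ ∩ S₋(□)| is even unless there exists □' ∈ ξ ∩ (□ − ℕ·(1,1,1,1)) of the form □' = (0,0,0,d) with d > 0. -/
open scoped BigOperators

/-- A subset of `ℕ^d` is downward closed if it contains `p − e` whenever it contains `p`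
and `p − e ∈ ℕ^d`, for a standard basis vector `e`. -/
def DownClosed {d : ℕ} (S : Set (Fin d → ℕ)) : Prop :=
  ∀ p ∈ S, ∀ i : Fin d, 0 < p i → Function.update p i (p i - 1) ∈ S

/-- `proj i` deletes the `i`-th coordinate of a point of `ℕ⁴`. -/
def proj (i : Fin 4) (p : Fin 4 → ℕ) : Fin 3 → ℕ := fun j => p (i.succAbove j)

/-- A plane partition is a finite downward closed subset of `ℕ³`. -/
def IsPlanePartition (π : Set (Fin 3 → ℕ)) : Prop := π.Finite ∧ DownClosed π

/-- A solid partition with legs `(π 0, π 1, π 2, π 3)`: a downward closed subset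
`ξ ⊆ ℕ⁴` such that, far enough along the `i`-th axis, membership in `ξ` is governed by
the plane partition `π i`. -/
def IsSolidPartitionWithLegs (π : Fin 4 → Set (Fin 3 → ℕ)) (ξ : Set (Fin 4 → ℕ)) : Prop :=
  (∀ i, IsPlanePartition (π i)) ∧ DownClosed ξ ∧
    ∃ N : ℕ, ∀ i : Fin 4, ∀ p : Fin 4 → ℕ, N ≤ p i → (p ∈ ξ ↔ proj i p ∈ π i)

/-- The number of legs containing a box. -/
noncomputable def nlegs (π : Fin 4 → Set (Fin 3 → ℕ)) (p : Fin 4 → ℕ) : ℕ :=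
  {i : Fin 4 | proj i p ∈ π i}.ncard

/-- `S₋(□) = {□ − (ε₁,ε₂,ε₃,1) − m·(1,1,1,1) : ε ∈ {0,1}³, m ∈ ℕ} ∩ ℕ⁴`. -/
def Sminus (n : Fin 4 → ℕ) : Set (Fin 4 → ℕ) :=
  { x | ∃ ε : Fin 3 → ℕ, (∀ t, ε t ≤ 1) ∧ ∃ m : ℕ,
      ∀ t : Fin 4, (x t : ℤ) =
        (n t : ℤ) - (if h : (t : ℕ) < 3 then (ε ⟨t, h⟩ : ℤ) else 1) - (m : ℤ) }

/-- `S₊(□) = {□ + (ε₁,ε₂,ε₃,0) + m·(1,1,1,1) : ε ∈ {0,1}³, m ∈ ℕ}`. -/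
def Splus (n : Fin 4 → ℕ) : Set (Fin 4 → ℕ) :=
  { x | ∃ ε : Fin 3 → ℕ, (∀ t, ε t ≤ 1) ∧ ∃ m : ℕ,
      ∀ t : Fin 4, x t = n t + (if h : (t : ℕ) < 3 then ε ⟨t, h⟩ else 0) + m }

/-!
Write `□ - (ε, 1) - m • 1` as a point of layer `m`, whose last coordinate is `n₄ - 1 - m`. Layer `m`
is then a unit cube cut off by the coordinate hyperplanes, a product of the sets
`{nᵢ - m - 1, nᵢ - m} ∩ ℕ`. Such a set has two elements if `m < nᵢ`, one if `m = nᵢ` and none if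
`nᵢ < m`, so layer `m` has odd cardinality iff `m = n₁ = n₂ = n₃`, and this layer occurs precisely
when `m < n₄`.
-/

namespace DownClosed

variable {d : ℕ} {S : Set (Fin d → ℕ)}

theorem mem_of_covBy (hS : DownClosed S) {p q : Fin d → ℕ} (hqp : q ⋖ p) (hp : p ∈ S) : q ∈ S := by
  obtain ⟨i, a, ha, rfl⟩ := Pi.covBy_iff_exists_left_eq.1 hqp
  obtain rfl : a = p i - 1 := Nat.eq_sub_of_add_eq (Order.covBy_iff_add_one_eq.1 ha)
  exact hS p hp i ha.lt.pos

theorem isLowerSet (hS : DownClosed S) : IsLowerSet S := fun _ _ hqp hp ↦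
  (le_iff_reflTransGen_covBy.1 hqp).head_induction_on hp fun hcov _ hmem ↦
    hS.mem_of_covBy hcov hmem

end DownClosed

theorem odd_finsetProd_iff {ι : Type*} {s : Finset ι} {f : ι → ℕ} :
    Odd (∏ i ∈ s, f i) ↔ ∀ i ∈ s, Odd (f i) := by
  simp only [← Nat.not_even_iff_odd, even_iff_two_dvd, Nat.prime_two.prime.dvd_finsetProd_iff,
    not_exists, not_and]

theorem odd_card_iff_nonempty_of_card_le_one {α : Type*} {s : Finset α} (hs : s.card ≤ 1) :
    Odd s.card ↔ s.Nonempty := by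
  rw [← Finset.card_pos, Nat.odd_iff]
  omega

section CubeBelow

variable {ι : Type*} [Fintype ι] [DecidableEq ι] {a x : ι → ℕ} {m : ℕ}

/-- The part in `ℕ^ι` of the unit cube `a - {0, 1}^ι - m • 1`. The interval bounds use truncated
subtraction, arranged so that the factor at `i` is empty when `a i < m`. -/
def cubeBelow (a : ι → ℕ) (m : ℕ) : Finset (ι → ℕ) :=
  Fintype.piFinset fun i ↦ Finset.Ico (a i - (m + 1)) (a i + 1 - m)

theorem mem_cubeBelow : x ∈ cubeBelow a m ↔ ∀ i, x i + m ≤ a i ∧ a i ≤ x i + m + 1 := by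
  simp only [cubeBelow, Fintype.mem_piFinset, Finset.mem_Ico]
  exact forall_congr' fun i ↦ by omega

theorem odd_card_cubeBelow_iff : Odd (cubeBelow a m).card ↔ ∀ i, a i = m := by
  have odd_card_factor (i : ι) : Odd (a i + 1 - m - (a i - (m + 1))) ↔ a i = m := by
    rw [Nat.odd_iff]
    omega
  simp only [cubeBelow, Fintype.card_piFinset, Nat.card_Ico, odd_finsetProd_iff, Finset.mem_univ,
    true_imp_iff, odd_card_factor]

end CubeBelow

section Sminus

variable {n x : Fin 4 → ℕ} {m : ℕ}

theorem mem_Sminus :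
    x ∈ Sminus n ↔ ∃ m, Fin.init x ∈ cubeBelow (Fin.init n) m ∧ x 3 + (m + 1) = n 3 := by
  have mem_iff : x ∈ Sminus n ↔ ∃ ε : Fin 3 → ℕ, (∀ i, ε i ≤ 1) ∧ ∃ m : ℕ,
      (∀ i, (Fin.init x i : ℤ) = Fin.init n i - ε i - m) ∧ (x 3 : ℤ) = n 3 - 1 - m := by
    simp [Sminus, Fin.forall_fin_succ', Fin.init]
  simp only [mem_iff, mem_cubeBelow]
  constructor
  · rintro ⟨ε, hε, m, hinit, hlast⟩
    exact ⟨m, fun i ↦ by grind, by omega⟩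
  · rintro ⟨m, hinit, hlast⟩
    exact ⟨fun i ↦ Fin.init n i - m - Fin.init x i, fun i ↦ by grind, m, fun i ↦ by grind, by omega⟩

theorem le_of_mem_Sminus (hx : x ∈ Sminus n) : x ≤ n := by
  obtain ⟨m, hinit, hlast⟩ := mem_Sminus.1 hx
  exact Fin.forall_fin_succ'.2
    ⟨fun i ↦ le_of_add_le_left (mem_cubeBelow.1 hinit i).1, le_of_add_le_left hlast.le⟩

/-- The points `n - (ε, 1) - m • 1` of `Sminus n` for a given `m < n 3`. For larger `m` the last
coordinate is truncated, and the points need not belong to `Sminus n`. -/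
def SminusLayer (n : Fin 4 → ℕ) (m : ℕ) : Finset (Fin 4 → ℕ) :=
  (cubeBelow (Fin.init n) m).image fun y ↦ Fin.snoc (α := fun _ ↦ ℕ) y (n 3 - (m + 1))

theorem mem_SminusLayer :
    x ∈ SminusLayer n m ↔ Fin.init x ∈ cubeBelow (Fin.init n) m ∧ x 3 = n 3 - (m + 1) := by
  rw [SminusLayer, Finset.mem_image]
  constructor
  · rintro ⟨y, hy, rfl⟩
    exact ⟨by rwa [Fin.init_snoc], Fin.snoc_last (α := fun _ ↦ ℕ) _ _⟩
  · rintro ⟨hinit, hlast⟩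
    exact ⟨Fin.init x, hinit, hlast ▸ Fin.snoc_init_self x⟩

theorem card_SminusLayer (n : Fin 4 → ℕ) (m : ℕ) :
    (SminusLayer n m).card = (cubeBelow (Fin.init n) m).card :=
  Finset.card_image_of_injective _ (Fin.snoc_left_injective (α := fun _ ↦ ℕ) _)

theorem pairwiseDisjoint_SminusLayer (n : Fin 4 → ℕ) :
    (Finset.range (n 3) : Set ℕ).PairwiseDisjoint (SminusLayer n) := by
  intro m hm m' hm' hne
  refine Finset.disjoint_left.2 fun x hx hx' ↦ hne ?_
  rw [mem_SminusLayer] at hx hx'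
  rw [Finset.mem_coe, Finset.mem_range] at hm hm'
  omega

theorem Sminus_eq_biUnion (n : Fin 4 → ℕ) :
    Sminus n = ((Finset.range (n 3)).biUnion (SminusLayer n) : Finset (Fin 4 → ℕ)) := by
  ext x
  simp only [mem_Sminus, Finset.mem_coe, Finset.mem_biUnion, Finset.mem_range,
    mem_SminusLayer]
  grind

theorem finite_Sminus (n : Fin 4 → ℕ) : (Sminus n).Finite := by
  rw [Sminus_eq_biUnion]
  exact Finset.finite_toSet _

theorem ncard_Sminus (n : Fin 4 → ℕ) :
    (Sminus n).ncard = ∑ m ∈ Finset.range (n 3), (cubeBelow (Fin.init n) m).card := by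
  rw [Sminus_eq_biUnion, Set.ncard_coe_finset, Finset.card_biUnion (pairwiseDisjoint_SminusLayer n)]
  simp only [card_SminusLayer]

theorem odd_ncard_Sminus_iff_exists :
    Odd (Sminus n).ncard ↔ ∃ m < n 3, ∀ i, Fin.init n i = m := by
  have card_oddLayers_le_one : {m ∈ Finset.range (n 3) | ∀ i, Fin.init n i = m}.card ≤ 1 :=
    Finset.card_le_one.2 fun m hm m' hm' ↦
      ((Finset.mem_filter.1 hm).2 0).symm.trans ((Finset.mem_filter.1 hm').2 0)
  rw [ncard_Sminus, Finset.odd_sum_iff_odd_card_odd]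
  simp only [odd_card_cubeBelow_iff]
  rw [odd_card_iff_nonempty_of_card_le_one card_oddLayers_le_one]
  simp only [Finset.Nonempty, Finset.mem_filter, Finset.mem_range]

theorem odd_ncard_Sminus_iff :
    Odd (Sminus n).ncard ↔ n 0 = n 1 ∧ n 1 = n 2 ∧ n 2 < n 3 := by
  rw [odd_ncard_Sminus_iff_exists]
  constructor
  · rintro ⟨m, hm, h⟩
    have h0 : n 0 = m := h 0
    have h1 : n 1 = m := h 1
    have h2 : n 2 = m := h 2
    omega
  · rintro ⟨h01, h12, h23⟩
    exact ⟨n 2, h23, by simp [Fin.forall_fin_succ, Fin.init, h01, h12]⟩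

end Sminus

/-- Let `ξ ⊆ ℕ⁴` be downward closed and `□ = (n₁,n₂,n₃,n₄) ∈ ξ`.  Then
`S₋(□) ⊆ ξ` (so `ξ ∩ S₋(□) = S₋(□)`), `S₋(□)` is finite, and its cardinality is odd iff
`n₁ = n₂ = n₃ < n₄`.  In particular `|ξ ∩ S₋(□)|` is even unless there exists
`□' ∈ ξ ∩ (□ − ℕ·(1,1,1,1))` of the form `□' = (0,0,0,d)` with `d > 0`. -/
theorem Sminus_parity
    (ξ : Set (Fin 4 → ℕ)) (hξ : DownClosed ξ) (n : Fin 4 → ℕ) (hn : n ∈ ξ) :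
    Sminus n ⊆ ξ ∧ (ξ ∩ Sminus n = Sminus n) ∧ (Sminus n).Finite ∧
      (Odd (Sminus n).ncard ↔ (n 0 = n 1 ∧ n 1 = n 2 ∧ n 2 < n 3)) ∧
      (¬ Even ((ξ ∩ Sminus n).ncard) →
        ∃ x ∈ ξ, (∃ m : ℕ, ∀ t : Fin 4, (x t : ℤ) = (n t : ℤ) - (m : ℤ)) ∧
          x 0 = 0 ∧ x 1 = 0 ∧ x 2 = 0 ∧ 0 < x 3) := by
  have hsub : Sminus n ⊆ ξ := fun x hx ↦ hξ.isLowerSet (le_of_mem_Sminus hx) hn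
  have hinter : ξ ∩ Sminus n = Sminus n := Set.inter_eq_right.2 hsub
  refine ⟨hsub, hinter, finite_Sminus n, odd_ncard_Sminus_iff, fun hodd ↦ ?_⟩
  rw [hinter, Nat.not_even_iff_odd, odd_ncard_Sminus_iff] at hodd
  obtain ⟨h01, h12, h23⟩ := hodd
  have n_two_le : ∀ t, n 2 ≤ n t := by
    simp only [Fin.forall_fin_succ]
    grind
  exact ⟨fun t ↦ n t - n 2, hξ.isLowerSet (fun t ↦ Nat.sub_le _ _) hn,
    ⟨n 2, fun t ↦ Nat.cast_sub (n_two_le t)⟩, Nat.sub_eq_zero_of_le (h01.trans h12).le,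
    Nat.sub_eq_zero_of_le h12.le, Nat.sub_self _, Nat.sub_pos_of_lt h23⟩
end

section
/- Let ξ be a solid partition with legs (π¹,π²,π³,π⁴) with π⁴ = ∅, and let □ ∈ ξ. Then ξ ∩ S₊(□) is finite and the sum Σ_{□' ∈ ξ ∩ S₊(□)} nlegs(□') is even. -/
/-!
Whether a box lies in the `i`-th leg does not depend on its `i`-th coordinate. For `i ≠ 4` the set
`S₊(□)` pairs each of its boxes with the one differing by the bit `εᵢ`, so the `i`-th leg meets
`S₊(□)` in an even number of boxes, all of which lie in `ξ` because `ξ` contains its legs. As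
`π⁴ = ∅`, the fourth leg contributes nothing, and counting pairs (box, leg) leg by leg gives the
parity. Emptiness of `π⁴` also bounds the fourth coordinate on `ξ`, whence finiteness.
-/

open scoped BigOperators

section Counting

variable {α β : Type*}

theorem even_card_of_involution {s : Finset α} {f : α → α} (hmaps : ∀ x ∈ s, f x ∈ s)
    (hinv : ∀ x ∈ s, f (f x) = x) (hne : ∀ x ∈ s, f x ≠ x) : Even s.card := by
  have hsum : ∑ _x ∈ s, (1 : ZMod 2) = 0 :=
    Finset.sum_involution (fun x _ ↦ f x) (fun _ _ ↦ by decide) (fun x hx _ ↦ hne x hx) hmaps hinv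
  rw [← ZMod.natCast_eq_zero_iff_even, Finset.cast_card, hsum]

theorem finsum_mem_ncard_comm [Fintype β] {S : Set α} (hS : S.Finite) (r : α → β → Prop) :
    ∑ᶠ x ∈ S, {b | r x b}.ncard = ∑ b, {x ∈ S | r x b}.ncard := by
  classical
  lift S to Finset α using hS
  have h := Finset.sum_card_bipartiteAbove_eq_sum_card_bipartiteBelow (s := S) (t := .univ) r
  rw [finsum_mem_coe_finset]
  simp only [Finset.mem_coe, ← Set.ncard_coe_finset, Finset.coe_bipartiteAbove,
    Finset.coe_bipartiteBelow, Finset.mem_univ, true_and] at h ⊢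
  exact h

end Counting

section Diagonal

variable {ι : Type*}

/-- The set `S₊(n)` in any dimension, with `k` in the role of the last coordinate: the union over
`m` of the unit cubes with lowest corner `n + m • (1, …, 1)` in the hyperplanes `x k = n k + m`. -/
def diagonalStack (k : ι) (n : ι → ℕ) : Set (ι → ℕ) :=
  {x | ∃ m, x k = n k + m ∧ ∀ i ≠ k, x i = n i + m ∨ x i = n i + m + 1}

theorem update_mem_iff_of_dependsOn_compl [DecidableEq ι] {α : ι → Type*} {C : Set (∀ i, α i)}
    {i : ι} (hC : DependsOn (· ∈ C) {i}ᶜ) (x : ∀ i, α i) (a : α i) :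
    Function.update x i a ∈ C ↔ x ∈ C :=
  (hC fun _ hj ↦ Function.update_of_ne hj a x).to_iff

theorem eq_empty_of_dependsOn_compl_of_bddAbove {α : ι → Type*} {C : Set (∀ i, α i)} {k : ι}
    [Preorder (α k)] [NoMaxOrder (α k)] (hC : DependsOn (· ∈ C) {k}ᶜ)
    (hbdd : BddAbove (Function.eval k '' C)) : C = ∅ := by
  classical
  obtain ⟨N, hN⟩ := hbdd
  refine Set.eq_empty_of_forall_notMem fun x hx ↦ ?_
  obtain ⟨a, ha⟩ := exists_gt N
  have hmem := (update_mem_iff_of_dependsOn_compl hC x a).2 hx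
  have haN : a ≤ N := by simpa using hN (Set.mem_image_of_mem _ hmem)
  exact ha.not_ge haN

theorem finite_inter_diagonalStack [Finite ι] {ξ : Set (ι → ℕ)} {k : ι}
    (hξ : BddAbove (Function.eval k '' ξ)) (n : ι → ℕ) : (ξ ∩ diagonalStack k n).Finite := by
  classical
  have := Fintype.ofFinite ι
  obtain ⟨N, hN⟩ := hξ
  refine (Set.finite_Iic fun i ↦ n i + N + 1).subset ?_
  rintro x ⟨hx, m, hk, hcube⟩ i
  have hxN : x k ≤ N := hN (Set.mem_image_of_mem _ hx)
  rcases eq_or_ne i k with rfl | hi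
  · lia
  · have := hcube i hi
    lia

variable [DecidableEq ι] {k i : ι} {n x : ι → ℕ}

/-- The move to the neighbour in direction `i` inside the cube of `diagonalStack k n` that contains
`x`. The cube is the one of index `x k - n k`, where the subtraction truncates off the stack. -/
def diagonalFlip (k : ι) (n : ι → ℕ) (i : ι) (x : ι → ℕ) : ι → ℕ :=
  Function.update x i (Equiv.swap (n i + (x k - n k)) (n i + (x k - n k) + 1) (x i))

theorem diagonalFlip_involutive (hi : i ≠ k) : (diagonalFlip k n i).Involutive := fun x ↦ by
  simp [diagonalFlip, hi.symm]

theorem diagonalFlip_mem (hi : i ≠ k) (hx : x ∈ diagonalStack k n) :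
    diagonalFlip k n i x ∈ diagonalStack k n := by
  obtain ⟨m, hk, hcube⟩ := hx
  refine ⟨m, by simp [diagonalFlip, hi.symm, hk], fun j hj ↦ ?_⟩
  rcases eq_or_ne j i with rfl | hji
  · rcases hcube j hj with h | h <;> simp [diagonalFlip, hk, h]
  · simpa [diagonalFlip, hji] using hcube j hj

theorem diagonalFlip_ne (hi : i ≠ k) (hx : x ∈ diagonalStack k n) : diagonalFlip k n i x ≠ x := by
  obtain ⟨m, hk, hcube⟩ := hx
  rw [diagonalFlip, Ne, Function.update_eq_self_iff]
  rcases hcube i hi with h | h <;> simp [hk, h]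

end Diagonal

theorem even_ncard_inter_diagonalStack {ι : Type*} {C : Set (ι → ℕ)} {k i : ι} {n : ι → ℕ}
    (hi : i ≠ k) (hC : DependsOn (· ∈ C) {i}ᶜ) (hfin : (C ∩ diagonalStack k n).Finite) :
    Even (C ∩ diagonalStack k n).ncard := by
  classical
  rw [Set.ncard_eq_toFinset_card _ hfin]
  refine even_card_of_involution (f := diagonalFlip k n i) ?_
    (fun x _ ↦ diagonalFlip_involutive hi x) ?_ <;> simp only [hfin.mem_toFinset] <;> intro x hx
  · exact ⟨(update_mem_iff_of_dependsOn_compl hC x _).2 hx.1, diagonalFlip_mem hi hx.2⟩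
  · exact diagonalFlip_ne hi hx.2

section SolidPartition

variable {π : Fin 4 → Set (Fin 3 → ℕ)} {ξ : Set (Fin 4 → ℕ)}

theorem Splus_eq_diagonalStack (n : Fin 4 → ℕ) : Splus n = diagonalStack 3 n := by
  ext x
  constructor
  · rintro ⟨ε, hε, m, hx⟩
    refine ⟨m, by simpa using hx 3, fun i hi ↦ ?_⟩
    have hlt : (i : ℕ) < 3 := Fin.val_lt_last hi
    have hxi := hx i
    have hεi := hε ⟨i, hlt⟩
    rw [dif_pos hlt] at hxi
    lia
  · rintro ⟨m, h3, hcube⟩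
    have hbit (t : Fin 3) := hcube t.castSucc (Fin.castSucc_lt_last t).ne
    refine ⟨fun t ↦ x t.castSucc - (n t.castSucc + m), fun t ↦ ?_, m, fun t ↦ ?_⟩
    · have := hbit t
      lia
    · induction t using Fin.lastCases with
      | last => simpa using h3
      | cast t =>
        have := hbit t
        simp only [Fin.val_castSucc, t.isLt, dif_pos, Fin.eta]
        lia

theorem dependsOn_mem_preimage_proj (i : Fin 4) (S : Set (Fin 3 → ℕ)) :
    DependsOn (· ∈ proj i ⁻¹' S) {i}ᶜ := fun x y hxy ↦ by
  have hproj : proj i x = proj i y := funext fun j ↦ hxy _ (Fin.succAbove_ne i j)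
  simp only [Set.mem_preimage, hproj]

theorem DownClosed.of_update_add {d : ℕ} {S : Set (Fin d → ℕ)} (hS : DownClosed S)
    {x : Fin d → ℕ} {i : Fin d} {a : ℕ} (h : Function.update x i (x i + a) ∈ S) : x ∈ S := by
  induction a with
  | zero => simpa using h
  | succ a ih => exact ih (by simpa [← add_assoc] using hS _ h i (by simp))

namespace IsSolidPartitionWithLegs

theorem preimage_proj_subset (hξ : IsSolidPartitionWithLegs π ξ) (i : Fin 4) :
    proj i ⁻¹' π i ⊆ ξ := by
  obtain ⟨-, hdown, N, hN⟩ := hξ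
  intro x hx
  refine hdown.of_update_add (i := i) (a := N) ((hN i _ (by simp)).2 ?_)
  exact (update_mem_iff_of_dependsOn_compl (dependsOn_mem_preimage_proj i (π i)) x _).2 hx

theorem bddAbove_eval_image {i : Fin 4} (hξ : IsSolidPartitionWithLegs π ξ) (hi : π i = ∅) :
    BddAbove (Function.eval i '' ξ) := by
  obtain ⟨-, -, N, hN⟩ := hξ
  refine ⟨N, Set.forall_mem_image.2 fun x hx ↦ le_of_not_ge fun hNx ↦ ?_⟩
  simpa [hi] using (hN i x hNx).1 hx

end IsSolidPartitionWithLegs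

end SolidPartition

theorem Splus_nlegs_sum_even_general {ι : Type*} [Finite ι] {k : ι} {C : ι → Set (ι → ℕ)}
    {ξ : Set (ι → ℕ)} (hC : ∀ i, DependsOn (· ∈ C i) {i}ᶜ) (hCξ : ∀ i, C i ⊆ ξ)
    (hξ : BddAbove (Function.eval k '' ξ)) (n : ι → ℕ) :
    (ξ ∩ diagonalStack k n).Finite ∧
      Even (∑ᶠ x ∈ ξ ∩ diagonalStack k n, {i | x ∈ C i}.ncard) := by
  classical
  have := Fintype.ofFinite ι
  have hfin := finite_inter_diagonalStack hξ n
  refine ⟨hfin, ?_⟩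
  rw [finsum_mem_ncard_comm hfin fun x i ↦ x ∈ C i]
  refine Finset.even_sum _ fun i _ ↦ ?_
  have hleg : {x ∈ ξ ∩ diagonalStack k n | x ∈ C i} = C i ∩ diagonalStack k n := by
    ext x
    exact ⟨fun h ↦ ⟨h.2, h.1.2⟩, fun h ↦ ⟨⟨hCξ i h.1, h.2⟩, h.1⟩⟩
  rw [hleg]
  rcases eq_or_ne i k with rfl | hi
  · have hempty := eq_empty_of_dependsOn_compl_of_bddAbove (hC i) (hξ.mono (Set.image_mono (hCξ i)))
    simp [hempty]
  · exact even_ncard_inter_diagonalStack hi (hC i)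
      (hfin.subset (Set.inter_subset_inter_left _ (hCξ i)))

/-- Let `ξ` be a solid partition with legs `(π¹,π²,π³,π⁴)` with `π⁴ = ∅`,
and let `□ ∈ ξ`.  Then `ξ ∩ S₊(□)` is finite and `Σ_{□' ∈ ξ ∩ S₊(□)} nlegs(□')` is
even. -/
theorem Splus_nlegs_sum_even
    (π : Fin 4 → Set (Fin 3 → ℕ)) (ξ : Set (Fin 4 → ℕ))
    (hξ : IsSolidPartitionWithLegs π ξ) (h4 : π 3 = ∅)
    (n : Fin 4 → ℕ) (hn : n ∈ ξ) :
    (ξ ∩ Splus n).Finite ∧ Even (∑ᶠ x ∈ ξ ∩ Splus n, nlegs π x) := by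
  rw [Splus_eq_diagonalStack]
  exact Splus_nlegs_sum_even_general (fun i ↦ dependsOn_mem_preimage_proj i (π i))
    hξ.preimage_proj_subset (hξ.bddAbove_eval_image h4) n
end

section
/- Let ξ be a solid partition with legs (π¹,π²,π³,π⁴). Then: (i) the set ξ_fin = {□ ∈ ξ : nlegs(□) ≠ 1} is finite; (ii) if moreover π⁴ = ∅, then the set {(n₁,n₂,n₃,n₄) ∈ ξ : n₁ = n₂ = n₃ < n₄} is finite (so the sum defining NP₄(ξ) is finite), and for every □ ∈ ℕ⁴ the set ξ ∩ S₊(□) is finite. -/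
open scoped BigOperators

/-!
Far out along the `i`-th axis, membership in `ξ` forces a box into the `i`-th leg. If the `i`-th
coordinate also exceeds every coordinate of every box of the plane partitions, then no other leg
can contain the box, because every other projection keeps that coordinate. So a box of `ξ` lying
in zero or several legs has all its coordinates in a fixed finite set. When the fourth leg is empty
the fourth coordinate is bounded on `ξ`, and on both sets of part (ii) it controls the other three.
-/

section Legs

variable {α : Type*}

/-- The set of all coordinates of all points of a family of sets of tuples. A coordinate outside
it plays the role of a coordinate that is large compared with the legs. -/
def coordValues {ι κ : Type*} (π : ι → Set (κ → α)) : Set α :=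
  ⋃ (i) (j), Function.eval j '' π i

lemma mem_coordValues {ι κ : Type*} {π : ι → Set (κ → α)} {i : ι} {q : κ → α} (hq : q ∈ π i)
    (j : κ) : q j ∈ coordValues π :=
  Set.mem_iUnion₂.2 ⟨i, j, q, hq, rfl⟩

lemma finite_coordValues {ι κ : Type*} [Finite ι] [Finite κ] {π : ι → Set (κ → α)}
    (hπ : ∀ i, (π i).Finite) : (coordValues π).Finite :=
  Set.finite_iUnion fun i ↦ Set.finite_iUnion fun _ ↦ (hπ i).image _

variable {d : ℕ} {π : Fin (d + 1) → Set (Fin d → α)}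

lemma eq_of_removeNth_mem {p : Fin (d + 1) → α} {i k : Fin (d + 1)}
    (hi : p i ∉ coordValues π) (hk : k.removeNth p ∈ π k) : k = i := by
  by_contra hki
  obtain ⟨j, rfl⟩ := Fin.exists_succAbove_eq (Ne.symm hki)
  exact hi (mem_coordValues hk j)

lemma setOf_removeNth_mem_eq_singleton {p : Fin (d + 1) → α} {i : Fin (d + 1)}
    (hi : p i ∉ coordValues π) (hp : i.removeNth p ∈ π i) :
    {k | k.removeNth p ∈ π k} = {i} :=
  Set.eq_singleton_iff_unique_mem.2 ⟨hp, fun _ hk ↦ eq_of_removeNth_mem hi hk⟩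

lemma finite_setOf_ncard_removeNth_mem_ne_one {ξ : Set (Fin (d + 1) → α)} {s : Set α}
    (hs : s.Finite) (hπ : ∀ i, (π i).Finite)
    (hξ : ∀ p ∈ ξ, ∀ i, p i ∉ s → i.removeNth p ∈ π i) :
    {p ∈ ξ | {i | i.removeNth p ∈ π i}.ncard ≠ 1}.Finite := by
  refine (Set.Finite.pi' fun _ ↦ hs.union (finite_coordValues hπ)).subset ?_
  rintro p ⟨hp, hne⟩ i
  by_contra hi
  obtain ⟨his, hiπ⟩ := not_or.1 hi
  exact hne (Set.ncard_eq_one.2 ⟨i, setOf_removeNth_mem_eq_singleton hiπ (hξ p hp i his)⟩)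

end Legs

lemma finite_of_forall_le_add_of_forall_lt {ι : Type*} [Finite ι] {S : Set (ι → ℕ)} {k : ι}
    {N : ℕ} (c : ι → ℕ) (hc : ∀ p ∈ S, ∀ i, p i ≤ c i + p k) (hN : ∀ p ∈ S, p k < N) :
    S.Finite :=
  (Set.Finite.pi' fun i ↦ Set.finite_Iic (c i + N)).subset fun p hp i ↦
    (hc p hp i).trans (Nat.add_le_add_left (hN p hp).le _)

lemma le_add_of_mem_Splus {n x : Fin 4 → ℕ} (hx : x ∈ Splus n) (t : Fin 4) :
    x t ≤ n t + 1 + x 3 := by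
  obtain ⟨ε, hε, m, hm⟩ := hx
  have hshift : (if h : (t : ℕ) < 3 then ε ⟨t, h⟩ else 0) ≤ 1 := by
    split_ifs
    exacts [hε _, zero_le_one]
  have hm_le : m ≤ x 3 := (hm 3).symm ▸ Nat.le_add_left m _
  calc
    x t = n t + (if h : (t : ℕ) < 3 then ε ⟨t, h⟩ else 0) + m := hm t
    _ ≤ n t + 1 + x 3 := by gcongr

theorem solidPartition_finiteness_general
    (π : Fin 4 → Set (Fin 3 → ℕ)) (ξ : Set (Fin 4 → ℕ)) (N : ℕ) (hπ : ∀ i, (π i).Finite)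
    (hξ : ∀ p ∈ ξ, ∀ i, N ≤ p i → proj i p ∈ π i) :
    {p ∈ ξ | nlegs π p ≠ 1}.Finite ∧
    (π 3 = ∅ →
      {p ∈ ξ | p 0 = p 1 ∧ p 1 = p 2 ∧ p 2 < p 3}.Finite ∧
      ∀ n : Fin 4 → ℕ, (ξ ∩ Splus n).Finite) := by
  refine ⟨?_, fun hempty ↦ ?_⟩
  · exact finite_setOf_ncard_removeNth_mem_ne_one (Set.finite_Iio N) hπ
      fun p hp i hi ↦ hξ p hp i (not_lt.1 hi)
  have hlt : ∀ p ∈ ξ, p 3 < N := fun p hp ↦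
    not_le.1 fun hge ↦ Set.eq_empty_iff_forall_notMem.1 hempty _ (hξ p hp 3 hge)
  refine ⟨finite_of_forall_le_add_of_forall_lt 0 ?_ fun p hp ↦ hlt p hp.1, fun n ↦
    finite_of_forall_le_add_of_forall_lt (n + 1) (fun p hp ↦ le_add_of_mem_Splus hp.2)
      fun p hp ↦ hlt p hp.1⟩
  rintro p ⟨-, h01, h12, h23⟩ i
  have hle : p i ≤ p 3 := by
    match i with
    | 0 | 1 | 2 | 3 => omega
  exact hle.trans (Nat.le_add_left _ _)

/-- for a solid partition `ξ` with legs `(π¹,π²,π³,π⁴)`: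
(i) `ξ_fin = {□ ∈ ξ : nlegs(□) ≠ 1}` is finite;
(ii) if `π⁴ = ∅`, the index set of `NP₄(ξ)` is finite and `ξ ∩ S₊(□)` is finite for
every `□ ∈ ℕ⁴`. -/
theorem solidPartition_finiteness
    (π : Fin 4 → Set (Fin 3 → ℕ)) (ξ : Set (Fin 4 → ℕ))
    (hξ : IsSolidPartitionWithLegs π ξ) :
    {p ∈ ξ | nlegs π p ≠ 1}.Finite ∧
    (π 3 = ∅ →
      {p ∈ ξ | p 0 = p 1 ∧ p 1 = p 2 ∧ p 2 < p 3}.Finite ∧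
      ∀ n : Fin 4 → ℕ, (ξ ∩ Splus n).Finite) := by
  obtain ⟨hπ, -, N, hN⟩ := hξ
  exact solidPartition_finiteness_general π ξ N (fun i ↦ (hπ i).1) fun p hp i hi ↦ (hN i p hi).1 hp
end

section
/- Let k be a field, A an abelian group, and let V = ⊕_{λ∈A} V_λ and W = ⊕_{λ∈A} W_λ be finite-dimensional A-graded k-vector spaces such that dim V_λ ≤ 1 and dim W_λ ≤ 1 for every λ ∈ A. Let f : V → W be a linear map with f(V_λ) ⊆ W_λ for all λ, and suppose f is injective or surjective. Let N ⊆ V and P ⊆ W be graded subspaces (N = ⊕_λ (N ∩ V_λ), P = ⊕_λ (P ∩ W_λ)) with f(N) ⊆ P. Then for every λ ∈ A with N ∩ V_λ ≠ 0 and W_λ ≠ 0 one has W_λ ⊆ P; consequently the vector space of grade-preserving linear maps N → W (maps g with g(N ∩ V_λ) ⊆ W_λ for all λ) has the same dimension as the vector space of grade-preserving linear maps N → P. -/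
/-! STATEMENT 13: for `A`-graded finite-dimensional vector spaces `V, W` with all graded
pieces of dimension `≤ 1`, a grade-preserving linear map `f : V → W` which is injective
or surjective, and graded subspaces `N ⊆ V`, `P ⊆ W` with `f(N) ⊆ P`: for every `λ` with
`N ∩ V_λ ≠ 0` and `W_λ ≠ 0` one has `W_λ ⊆ P`, and consequently the space of
grade-preserving linear maps `N → W` has the same dimension as the space of
grade-preserving linear maps `N → P`. -/

open Module

/-- The subspace of `Hom(N, W)` consisting of the grade-preserving linear maps
(`g(N ∩ V_a) ⊆ W_a` for all `a`) whose image is contained in `P`. -/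
def gradedMaps {k A V W : Type*} [Field k]
    [AddCommGroup V] [Module k V] [AddCommGroup W] [Module k W]
    (Vl : A → Submodule k V) (Wl : A → Submodule k W)
    (N : Submodule k V) (P : Submodule k W) : Submodule k (N →ₗ[k] W) where
  carrier := { g | (∀ a : A, ∀ x : V, ∀ hx : x ∈ N, x ∈ Vl a → g ⟨x, hx⟩ ∈ Wl a) ∧
    ∀ y : N, g y ∈ P }
  add_mem' := by
    rintro g h ⟨hg1, hg2⟩ ⟨hh1, hh2⟩
    refine ⟨fun a x hx hxa => ?_, fun y => ?_⟩
    · simpa using (Wl a).add_mem (hg1 a x hx hxa) (hh1 a x hx hxa)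
    · simpa using P.add_mem (hg2 y) (hh2 y)
  zero_mem' :=
    ⟨fun a x hx _ => by simp, fun y => by simp⟩
  smul_mem' := by
    rintro c g ⟨hg1, hg2⟩
    refine ⟨fun a x hx hxa => ?_, fun y => ?_⟩
    · simpa using (Wl a).smul_mem c (hg1 a x hx hxa)
    · simpa using P.smul_mem c (hg2 y)

/-! Suppose `N` meets `V_a`. If `f` is injective, then `f(N ∩ V_a)` is a nonzero subspace of the line
`W_a` contained in `P`, so `W_a ⊆ P`. If `f` is surjective, then `f` maps each `V_a` onto `W_a`,
and the line `V_a` lies in `N`, so `W_a = f(V_a) ⊆ f(N) ⊆ P`. Hence every grade-preserving map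
`N → W` already takes its values in `P`. -/

theorem map_eq_of_surjective_of_iSupIndep {ι R M M₂ : Type*} [Ring R]
    [AddCommMonoid M] [Module R M] [AddCommGroup M₂] [Module R M₂]
    {p : ι → Submodule R M} {q : ι → Submodule R M₂} {f : M →ₗ[R] M₂}
    (hf : Function.Surjective f) (hp : ⨆ i, p i = ⊤) (hq : iSupIndep q)
    (hpq : ∀ i, (p i).map f ≤ q i) (i : ι) : (p i).map f = q i := by
  have iSup_map_eq_top : ⨆ i, (p i).map f = ⊤ := by
    rw [← Submodule.map_iSup, hp, Submodule.map_top, LinearMap.range_eq_top.2 hf]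
  exact congrFun ((hq.le_iff_eq_of_iSup_eq_top iSup_map_eq_top).1 hpq) i

theorem apply_mem_of_le_iSup_inf {ι R M M₂ : Type*} [Semiring R]
    [AddCommMonoid M] [Module R M] [AddCommMonoid M₂] [Module R M₂]
    {p : ι → Submodule R M} {N : Submodule R M} {P : Submodule R M₂} {g : N →ₗ[R] M₂}
    (hN : N ≤ ⨆ i, N ⊓ p i) (hg : ∀ i, ∀ x (hx : x ∈ N), x ∈ p i → g ⟨x, hx⟩ ∈ P) (y : N) :
    g y ∈ P := by
  have le_map_comap : N ≤ (P.comap g).map N.subtype :=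
    hN.trans (iSup_le fun i x hx ↦ ⟨⟨x, hx.1⟩, hg i x hx.1 hx.2, rfl⟩)
  obtain ⟨z, hz, hzy⟩ := le_map_comap y.2
  obtain rfl : z = y := Subtype.ext hzy
  exact hz

section DivisionRing

variable {K V W : Type*} [DivisionRing K] [AddCommGroup V] [Module K V]
  [AddCommGroup W] [Module K W]

theorem le_of_rank_le_one_of_inf_ne_bot {S T : Submodule K V} (hS : Module.rank K S ≤ 1)
    (hTS : T ⊓ S ≠ ⊥) : S ≤ T := by
  have hS_ne : S ≠ ⊥ := ne_bot_of_le_ne_bot hTS inf_le_right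
  have rank_eq_one : Module.rank K S = 1 :=
    hS.antisymm (Cardinal.one_le_iff_ne_zero.2 (mt Submodule.rank_eq_zero.1 hS_ne))
  have isAtom_S : IsAtom S :=
    Submodule.isAtom_iff_finrank_eq_one.2 (rank_eq_one_iff_finrank_eq_one.1 rank_eq_one)
  exact isAtom_S.not_disjoint_iff_le.1 fun h ↦ hTS h.symm.eq_bot

theorem le_of_injective_of_rank_le_one {f : V →ₗ[K] W} (hf : Function.Injective f)
    {S N : Submodule K V} {T P : Submodule K W} (hST : S.map f ≤ T) (hNP : N.map f ≤ P)
    (hT : Module.rank K T ≤ 1) (hNS : N ⊓ S ≠ ⊥) : T ≤ P := by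
  have map_ne_bot : (N ⊓ S).map f ≠ ⊥ := by
    simpa only [Submodule.map_bot] using (Submodule.map_injective_of_injective hf).ne hNS
  have map_le : (N ⊓ S).map f ≤ P ⊓ T :=
    (Submodule.map_inf_le f).trans (inf_le_inf hNP hST)
  exact le_of_rank_le_one_of_inf_ne_bot hT (ne_bot_of_le_ne_bot map_ne_bot map_le)

theorem map_le_of_rank_le_one {f : V →ₗ[K] W} {S N : Submodule K V} {P : Submodule K W}
    (hNP : N.map f ≤ P) (hS : Module.rank K S ≤ 1) (hNS : N ⊓ S ≠ ⊥) : S.map f ≤ P :=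
  (Submodule.map_mono (le_of_rank_le_one_of_inf_ne_bot hS hNS)).trans hNP

end DivisionRing

section Field

variable {k A V W : Type*} [Field k] [AddCommGroup V] [Module k V] [AddCommGroup W] [Module k W]
  {Vl : A → Submodule k V} {Wl : A → Submodule k W} {N : Submodule k V} {P : Submodule k W}

theorem gradedMaps_top_eq (hN : N ≤ ⨆ a, N ⊓ Vl a) (hP : ∀ a, N ⊓ Vl a ≠ ⊥ → Wl a ≤ P) :
    gradedMaps Vl Wl N ⊤ = gradedMaps Vl Wl N P := by
  refine le_antisymm (fun g hg ↦ ⟨hg.1, apply_mem_of_le_iSup_inf hN fun a x hxN hxa ↦ ?_⟩)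
    fun g hg ↦ ⟨hg.1, fun _ ↦ Submodule.mem_top⟩
  by_cases hNa : N ⊓ Vl a = ⊥
  · have hx : (⟨x, hxN⟩ : N) = 0 :=
      Subtype.ext ((Submodule.eq_bot_iff _).1 hNa x ⟨hxN, hxa⟩)
    rw [hx, map_zero]
    exact P.zero_mem
  · exact hP a hNa (hg.1 a x hxN hxa)

theorem graded_hom_space_dimensions_eq_general
    (hV : ⨆ a, Vl a = ⊤) (hW : iSupIndep Wl)
    (hVdim : ∀ a, Module.rank k (Vl a) ≤ 1) (hWdim : ∀ a, Module.rank k (Wl a) ≤ 1)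
    {f : V →ₗ[k] W} (hf : ∀ a, (Vl a).map f ≤ Wl a)
    (hbij : Function.Injective f ∨ Function.Surjective f)
    (hN : N ≤ ⨆ a, N ⊓ Vl a) (hNP : N.map f ≤ P) :
    (∀ a, N ⊓ Vl a ≠ ⊥ → Wl a ≤ P) ∧ gradedMaps Vl Wl N ⊤ = gradedMaps Vl Wl N P := by
  have le_P : ∀ a, N ⊓ Vl a ≠ ⊥ → Wl a ≤ P := by
    intro a hNa
    rcases hbij with hinj | hsurj
    · exact le_of_injective_of_rank_le_one hinj (hf a) hNP (hWdim a) hNa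
    · rw [← map_eq_of_surjective_of_iSupIndep hsurj hV hW hf a]
      exact map_le_of_rank_le_one hNP (hVdim a) hNa
  exact ⟨le_P, gradedMaps_top_eq hN le_P⟩

end Field

theorem graded_hom_space_dimensions_eq
    {k A V W : Type*} [Field k] [AddCommGroup A] [DecidableEq A]
    [AddCommGroup V] [Module k V] [FiniteDimensional k V]
    [AddCommGroup W] [Module k W] [FiniteDimensional k W]
    (Vl : A → Submodule k V) (Wl : A → Submodule k W)
    (hV : DirectSum.IsInternal Vl) (hW : DirectSum.IsInternal Wl)
    (hVdim : ∀ a, finrank k (Vl a) ≤ 1) (hWdim : ∀ a, finrank k (Wl a) ≤ 1)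
    (f : V →ₗ[k] W) (hf : ∀ a, (Vl a).map f ≤ Wl a)
    (hbij : Function.Injective f ∨ Function.Surjective f)
    (N : Submodule k V) (P : Submodule k W)
    (hN : N = ⨆ a, N ⊓ Vl a) (hP : P = ⨆ a, P ⊓ Wl a)
    (hNP : N.map f ≤ P) :
    (∀ a, N ⊓ Vl a ≠ ⊥ → Wl a ≠ ⊥ → Wl a ≤ P) ∧
      finrank k (gradedMaps Vl Wl N (⊤ : Submodule k W)) =
        finrank k (gradedMaps Vl Wl N P) := by
  obtain ⟨le_P, maps_eq⟩ := graded_hom_space_dimensions_eq_general hV.submodule_iSup_eq_top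
    hW.submodule_iSupIndep (fun a ↦ mod_cast FiniteDimensional.finrank_le_iff_rank_le.1 (hVdim a))
    (fun a ↦ mod_cast FiniteDimensional.finrank_le_iff_rank_le.1 (hWdim a)) hf hbij hN.le hNP
  exact ⟨fun a hNa _ ↦ le_P a hNa, by rw [maps_eq]⟩
end
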